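/- Let d̄ ≥ 2 be an integer and let c ≥ c_H ≥ 0 be non-negative integers. If c_H ≤ (c_H)_{⟨d̄⟩} + (c − c_H)_{⟨d̄−1⟩}, then c_H ≤ c_{⟨d̄⟩}. -/

import Mathlib

/-- Polynomial functions on a `K`-vector space `V`: the subalgebra of `V → K`
generated by the linear functionals. -/
def polyFuns (K V : Type*) [Field K] [AddCommGroup V] [Module K V] : Subalgebra K (V → K) :=
  Algebra.adjoin K {f : V → K | ∃ φ : V →ₗ[K] K, ⇑φ = f}

/-- A subset of (the affine space of) a `K`-vector space is Zariski closed if it is the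
common zero locus of a family of polynomial functions. -/
def IsZClosed (K : Type*) {V : Type*} [Field K] [AddCommGroup V] [Module K V]
    (Z : Set V) : Prop :=
  ∃ S : Set (V → K), (∀ f ∈ S, f ∈ polyFuns K V) ∧ Z = {v | ∀ f ∈ S, f v = 0}

/-- A subset is Zariski open if its complement is Zariski closed. -/
def IsZOpen (K : Type*) {V : Type*} [Field K] [AddCommGroup V] [Module K V]
    (U : Set V) : Prop :=
  IsZClosed K Uᶜ

/-- An irreducible variety: a nonempty Zariski closed set which is not the union of two
proper closed subsets. -/
def IsIrredVariety (K : Type*) {V : Type*} [Field K] [AddCommGroup V] [Module K V]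
    (W : Set V) : Prop :=
  IsZClosed K W ∧ W.Nonempty ∧
    ∀ Z₁ Z₂ : Set V, IsZClosed K Z₁ → IsZClosed K Z₂ → W ⊆ Z₁ ∪ Z₂ → (W ⊆ Z₁ ∨ W ⊆ Z₂)

/-- Auxiliary recursion for `wordIdeal`: letters are booleans, `true` standing for the
letter `c` (colon) and `false` for the letter `s` (sum). The natural number argument keeps
track of which linear form is to be used next (0-indexed). -/
def wordIdealAux {R : Type*} [CommRing R] (l : ℕ → R) : ℕ → Ideal R → List Bool → Ideal R
  | _, I, [] => I
  | j, I, a :: o =>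
      wordIdealAux l (j + 1)
        (if a then I.colon (Ideal.span {l j}) else I ⊔ Ideal.span {l j}) o

/-- The ideal `I_{l,o}` attached to a sequence of (linear) forms `l` and a word `o` in the
letters `{c, s}` (here `c = true`, `s = false`): starting from `(0)`, the `j`-th letter
either colons (`c`) or adds (`s`) the `j`-th form. -/
def wordIdeal {R : Type*} [CommRing R] (l : ℕ → R) (o : List Bool) : Ideal R :=
  wordIdealAux l 0 ⊥ o

/-- The degree `d` component `I ∩ R_d` of an ideal `I`, as a `K`-subspace of `𝒜 d`. -/
def homComp {K R : Type*} [Field K] [CommRing R] [Algebra K R]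
    (𝒜 : ℕ → Submodule K R) (I : Ideal R) (d : ℕ) : Submodule K (𝒜 d) :=
  Submodule.comap (𝒜 d).subtype (Submodule.restrictScalars K I)

/-- `dim_K (I)_d`, the dimension of the degree `d` component of the (homogeneous) ideal `I`. -/
noncomputable def homDim {K R : Type*} [Field K] [CommRing R] [Algebra K R]
    (𝒜 : ℕ → Submodule K R) (I : Ideal R) (d : ℕ) : ℕ :=
  Module.finrank K (homComp 𝒜 I d)

/-- `dim_K (R/I)_d`, the dimension of the degree `d` component of `R/I` for a
(homogeneous) ideal `I`, computed as `dim 𝒜 d / (I ∩ 𝒜 d)`. -/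
noncomputable def quotDim {K R : Type*} [Field K] [CommRing R] [Algebra K R]
    (𝒜 : ℕ → Submodule K R) (I : Ideal R) (d : ℕ) : ℕ :=
  Module.finrank K ((𝒜 d) ⧸ homComp 𝒜 I d)

/-- `macaulayDown c d = c_⟨d⟩`: if `c = C(k_d,d) + … + C(k_1,1)` is the `d`-th Macaulay
representation of `c`, then `c_⟨d⟩ = C(k_d - 1,d) + … + C(k_1 - 1,1)`; computed greedily. -/
def macaulayDown : ℕ → ℕ → ℕ
  | _, 0 => 0
  | c, d + 1 =>
      let k := Nat.findGreatest (fun k => Nat.choose k (d + 1) ≤ c) (c + d + 1)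
      Nat.choose (k - 1) (d + 1) + macaulayDown (c - Nat.choose k (d + 1)) d

/-- Property (Gr,d) for the linear forms `l 0, …, l (r-1)` (letters: `true = c`,
`false = s`): for every word `o` of length `i ≤ r`,
(1) if `m ⊄ I_o` and `i < r` then `l_{i+1} ∉ I_o`;
(2) if `i = r` and `|o|_c < d` then `m ⊆ I_o`;
(3) if `i ≤ r - 2` then `dim (I_{o,c,s})_{d - |o|_c - 1} ≤ dim (I_{o,s,c})_{d - |o|_c - 1}`. -/
def GrProp {K R : Type*} [Field K] [CommRing R] [Algebra K R]
    (𝒜 : ℕ → Submodule K R) [GradedAlgebra 𝒜] (l : ℕ → R) (r d : ℕ) : Prop :=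
  ∀ o : List Bool, o.length ≤ r →
    (¬ (HomogeneousIdeal.irrelevant 𝒜).toIdeal ≤ wordIdeal l o → o.length < r →
        l o.length ∉ wordIdeal l o) ∧
    (o.length = r → o.count true < d →
        (HomogeneousIdeal.irrelevant 𝒜).toIdeal ≤ wordIdeal l o) ∧
    (o.length + 2 ≤ r →
        homDim 𝒜 (wordIdeal l (o ++ [true, false])) (d - o.count true - 1) ≤
          homDim 𝒜 (wordIdeal l (o ++ [false, true])) (d - o.count true - 1))

/-!
Let `f = c_⟨d⟩` and suppose that `f < c_H`. The function `a ↦ a_⟨d⟩` is monotone and grows by at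
most one at each step, so `a - a_⟨d⟩ - (c - a)_⟨d-1⟩` is monotone in `a`. Hence it suffices to show
that it is positive at `a = f + 1`, that is, `(f + 1)_⟨d⟩ + (c - f - 1)_⟨d-1⟩ ≤ f`. This goes by
induction on `d`: if `c = C(k,d) + r` with `r < C(k,d-1)`, then `f = C(k-1,d) + r_⟨d-1⟩`, and
splitting `C(k-1,d)` off `f + 1` and `C(k-1,d-1)` off `c - f - 1` leaves the same inequality for
`r` and `d - 1`.
-/

theorem le_choose_succ_add (k d : ℕ) : k ≤ k.choose (d + 1) + d := by
  induction k with
  | zero => exact Nat.zero_le _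
  | succ k ih =>
    rw [Nat.choose_succ_succ']
    rcases le_or_gt d k with hdk | hkd
    · have := Nat.choose_pos hdk
      omega
    · omega

theorem exists_eq_choose_add (d : ℕ) {c : ℕ} (hc : 0 < c) :
    ∃ j r, d ≤ j ∧ r < (j + 1).choose d ∧ c = (j + 1).choose (d + 1) + r := by
  induction c, hc using Nat.le_induction with
  | base => exact ⟨d, 0, le_rfl, by simp, by simp⟩
  | succ c _ ih =>
    obtain ⟨j, r, hdj, hr, rfl⟩ := ih
    rcases Nat.lt_or_ge (r + 1) ((j + 1).choose d) with hr' | hr'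
    · exact ⟨j, r + 1, hdj, hr', by ring⟩
    · refine ⟨j + 1, 0, by omega, Nat.choose_pos (by omega), ?_⟩
      rw [Nat.choose_succ_succ' (j + 1)]
      omega

theorem macaulayDown_choose_add {d j r : ℕ} (hr : r < (j + 1).choose d) :
    macaulayDown ((j + 1).choose (d + 1) + r) (d + 1) =
      j.choose (d + 1) + macaulayDown r d := by
  have hgreatest : Nat.findGreatest (fun k => k.choose (d + 1) ≤ (j + 1).choose (d + 1) + r)
      ((j + 1).choose (d + 1) + r + d + 1) = j + 1 := by
    refine Nat.findGreatest_eq_iff.2 ⟨?_, fun _ => Nat.le_add_right _ _, fun k hk _ hle => ?_⟩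
    · have := le_choose_succ_add (j + 1) d
      omega
    · have hmono := Nat.choose_le_choose (d + 1) (Order.add_one_le_of_lt hk)
      rw [Nat.choose_succ_succ' (j + 1)] at hmono
      omega
  rw [macaulayDown]
  simp only [hgreatest, Nat.add_sub_cancel, Nat.add_sub_cancel_left]

theorem macaulayDown_zero_left (d : ℕ) : macaulayDown 0 d = 0 := by
  induction d with
  | zero => rfl
  | succ d ih =>
    cases d with
    | zero => simp [macaulayDown]
    | succ d =>
      have hzero : d.choose (d + 1 + 1) = 0 := Nat.choose_eq_zero_of_lt (by omega)
      simpa [ih, hzero] using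
        macaulayDown_choose_add (d := d + 1) (j := d) (r := 0) (by simp)

theorem macaulayDown_choose (j d : ℕ) :
    macaulayDown ((j + 1).choose (d + 1)) (d + 1) = j.choose (d + 1) := by
  rcases lt_or_ge j d with hjd | hdj
  · rw [Nat.choose_eq_zero_of_lt (by omega), Nat.choose_eq_zero_of_lt (by omega),
      macaulayDown_zero_left]
  · simpa [macaulayDown_zero_left] using
      macaulayDown_choose_add (r := 0) (Nat.choose_pos (by omega : d ≤ j + 1))

theorem macaulayDown_one_right (c : ℕ) : macaulayDown c 1 = c - 1 := by
  cases c with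
  | zero => exact macaulayDown_zero_left 1
  | succ c => simpa using macaulayDown_choose c 0

theorem macaulayDown_one_left (d : ℕ) : macaulayDown 1 d = 0 := by
  cases d with
  | zero => rfl
  | succ d => simpa using macaulayDown_choose d d

/-- For `r = C(j+1,d+1)` the left-hand argument is `C(j+2,d+2)`, so its Macaulay representation
starts with `j + 2`. The recursion survives this carry only when `r` is expanded in positive degree:
with `r = C(j+1,0)` it would read `(j + 2)_⟨1⟩ = j`. -/
theorem macaulayDown_choose_add_of_le {d j r : ℕ} (hr : r ≤ (j + 1).choose (d + 1)) :
    macaulayDown ((j + 1).choose (d + 1 + 1) + r) (d + 1 + 1) =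
      j.choose (d + 1 + 1) + macaulayDown r (d + 1) := by
  rcases hr.lt_or_eq with hr | rfl
  · exact macaulayDown_choose_add hr
  · rw [macaulayDown_choose, add_comm (Nat.choose _ _), ← Nat.choose_succ_succ',
      macaulayDown_choose, add_comm (Nat.choose _ _), ← Nat.choose_succ_succ']

theorem macaulayDown_succ_eq_or (c d : ℕ) :
    macaulayDown (c + 1) d = macaulayDown c d ∨
      macaulayDown (c + 1) d = macaulayDown c d + 1 := by
  induction d generalizing c with
  | zero => exact Or.inl rfl
  | succ d ih =>
    rcases c.eq_zero_or_pos with rfl | hc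
    · exact Or.inl (by rw [macaulayDown_one_left, macaulayDown_zero_left])
    cases d with
    | zero => exact Or.inr (by rw [macaulayDown_one_right, macaulayDown_one_right]; omega)
    | succ d =>
      obtain ⟨j, r, -, hr, rfl⟩ := exists_eq_choose_add (d + 1) hc
      rw [add_assoc, macaulayDown_choose_add_of_le (Order.add_one_le_of_lt hr),
        macaulayDown_choose_add_of_le hr.le]
      have := ih r
      omega

theorem macaulayDown_mono (d : ℕ) : Monotone (macaulayDown · d) :=
  monotone_nat_of_le_succ fun c => by
    have := macaulayDown_succ_eq_or c d
    omega

theorem macaulayDown_add_le (a b d : ℕ) : macaulayDown (a + b) d ≤ macaulayDown a d + b := by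
  induction b with
  | zero => rfl
  | succ b ih =>
    have := macaulayDown_succ_eq_or (a + b) d
    rw [← add_assoc]
    omega

theorem macaulayDown_lt_self {c : ℕ} (hc : 0 < c) (d : ℕ) : macaulayDown c d < c := by
  have hle := macaulayDown_add_le 1 (c - 1) d
  rw [Nat.add_sub_cancel' hc, macaulayDown_one_left] at hle
  omega

theorem macaulayDown_lt_choose {d k r : ℕ} (hdk : d ≤ k) (hr : r < (k + 1).choose d) :
    macaulayDown r d < k.choose d := by
  induction d generalizing k r with
  | zero => simp [macaulayDown]
  | succ d ih =>
    rcases r.eq_zero_or_pos with rfl | hr_pos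
    · rw [macaulayDown_zero_left]
      exact Nat.choose_pos hdk
    obtain ⟨j, s, hdj, hs, rfl⟩ := exists_eq_choose_add d hr_pos
    have hjk : j + 1 ≤ k := by
      by_contra! hkj
      have := Nat.choose_le_choose (d + 1) (Order.add_one_le_of_lt hkj)
      omega
    calc macaulayDown ((j + 1).choose (d + 1) + s) (d + 1)
        = j.choose (d + 1) + macaulayDown s d := macaulayDown_choose_add hs
      _ < j.choose (d + 1) + j.choose d := by gcongr; exact ih hdj hs
      _ = (j + 1).choose (d + 1) := by rw [Nat.choose_succ_succ', add_comm]
      _ ≤ k.choose (d + 1) := Nat.choose_le_choose _ hjk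

theorem le_macaulayDown_add_choose {d k r : ℕ} (hr : r ≤ (k + 1).choose (d + 1)) :
    r ≤ macaulayDown r (d + 1) + k.choose d := by
  have hle := macaulayDown_add_le r ((k + 1).choose (d + 1) - r) (d + 1)
  rw [Nat.add_sub_cancel' hr, macaulayDown_choose] at hle
  rw [Nat.choose_succ_succ'] at hr hle
  omega

theorem macaulayDown_succ_add_macaulayDown_le {d f g : ℕ}
    (hf : macaulayDown (f + 1 + g) (d + 1) = f) :
    macaulayDown (f + 1) (d + 1) + macaulayDown g d ≤ f := by
  induction d generalizing f g with
  | zero =>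
    rw [zero_add, macaulayDown_one_right]
    simp [macaulayDown]
  | succ d ih =>
    obtain ⟨j, r, hdj, hr, hc⟩ := exists_eq_choose_add (d + 1) (c := f + 1 + g) (by omega)
    obtain ⟨i, rfl⟩ : ∃ i, j = i + 1 := ⟨j - 1, by omega⟩
    rw [hc, macaulayDown_choose_add hr] at hf
    subst hf
    rw [Nat.choose_succ_succ' (i + 1)] at hc
    have hr_lt : macaulayDown r (d + 1) < (i + 1).choose (d + 1) := macaulayDown_lt_choose hdj hr
    have hr_le : r ≤ macaulayDown r (d + 1) + (i + 1).choose d := le_macaulayDown_add_choose hr.le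
    rw [add_assoc _ _ 1, macaulayDown_choose_add_of_le (Order.add_one_le_of_lt hr_lt),
      Nat.choose_succ_succ' i (d + 1)]
    rcases r.eq_zero_or_pos with rfl | hr_pos
    · rw [macaulayDown_zero_left] at hc ⊢
      have hg : macaulayDown g (d + 1) ≤ i.choose (d + 1) :=
        macaulayDown_choose i d ▸ macaulayDown_mono (d + 1) (by omega)
      rw [zero_add, macaulayDown_one_left]
      omega
    · obtain ⟨s, hs⟩ := Nat.exists_eq_add_of_lt (macaulayDown_lt_self hr_pos (d + 1))
      obtain rfl : g = (i + 1).choose (d + 1) + s := by omega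
      have hrec : macaulayDown (macaulayDown r (d + 1) + 1) (d + 1) + macaulayDown s d ≤
          macaulayDown r (d + 1) := ih (congrArg (macaulayDown · (d + 1)) (by omega))
      rw [macaulayDown_choose_add (by omega : s < (i + 1).choose d)]
      omega

/-- The numerical lemma in Green's argument: for `d̄ ≥ 2` and `c ≥ c_H ≥ 0`, if
`c_H ≤ (c_H)_⟨d̄⟩ + (c - c_H)_⟨d̄-1⟩` then `c_H ≤ c_⟨d̄⟩`. -/
theorem macaulay_numerical_lemma
    (dbar c cH : ℕ) (hdbar : 2 ≤ dbar) (hcH : cH ≤ c)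
    (h : cH ≤ macaulayDown cH dbar + macaulayDown (c - cH) (dbar - 1)) :
    cH ≤ macaulayDown c dbar := by
  obtain ⟨d, rfl⟩ : ∃ d, dbar = d + 1 := ⟨dbar - 1, by omega⟩
  rw [Nat.add_sub_cancel] at h
  by_contra! hlt
  set f := macaulayDown c (d + 1)
  have hkey : macaulayDown (f + 1) (d + 1) + macaulayDown (c - (f + 1)) d ≤ f :=
    macaulayDown_succ_add_macaulayDown_le (by rw [Nat.add_sub_cancel' (by omega)])
  have hgrowth : macaulayDown cH (d + 1) ≤ macaulayDown (f + 1) (d + 1) + (cH - (f + 1)) := by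
    simpa [Nat.add_sub_cancel' hlt] using macaulayDown_add_le (f + 1) (cH - (f + 1)) (d + 1)
  have hmono : macaulayDown (c - cH) d ≤ macaulayDown (c - (f + 1)) d :=
    macaulayDown_mono d (Nat.sub_le_sub_left hlt c)
  omega
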